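/- Let δ : 𝕃 → ℚ be the group homomorphism with δ(x⃗_i) = 1/p_i and δ(c⃗) = 1. If δ(ω⃗) < 0 (the Fano case), then the restriction to the interval [0, d c⃗] of the quotient map 𝕃 → 𝕃/ℤω⃗ is surjective onto 𝕃/ℤω⃗. -/

import Mathlib

/-- The subgroup of relations `p i • x⃗_i − c⃗` inside the free abelian group
`(Fin n → ℤ) × ℤ` on the generators `x⃗_1, …, x⃗_n, c⃗`. -/
def GLrels (n : ℕ) (p : Fin n → ℕ) : AddSubgroup ((Fin n → ℤ) × ℤ) :=
  AddSubgroup.closure (Set.range fun i : Fin n => ((Pi.single i (p i : ℤ), -1) : (Fin n → ℤ) × ℤ))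

/-- The grading group `𝕃 = ⟨x⃗_1, …, x⃗_n, c⃗⟩ / ⟨p_i x⃗_i − c⃗⟩`. -/
abbrev GLgroup (n : ℕ) (p : Fin n → ℕ) : Type :=
  ((Fin n → ℤ) × ℤ) ⧸ GLrels n p

/-- The generator `x⃗_i` of `𝕃`. -/
def GLx (n : ℕ) (p : Fin n → ℕ) (i : Fin n) : GLgroup n p :=
  QuotientAddGroup.mk (Pi.single i 1, 0)

/-- The generator `c⃗` of `𝕃`. -/
def GLc (n : ℕ) (p : Fin n → ℕ) : GLgroup n p :=
  QuotientAddGroup.mk (0, 1)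

/-- The positive cone `𝕃_+`: the submonoid of `𝕃` generated by `x⃗_1, …, x⃗_n` and `c⃗`. -/
def GLplus (n : ℕ) (p : Fin n → ℕ) : AddSubmonoid (GLgroup n p) :=
  AddSubmonoid.closure ({GLc n p} ∪ Set.range (GLx n p))

/-- The partial order relation on `𝕃`: `x⃗ ≤ y⃗` iff `y⃗ − x⃗ ∈ 𝕃_+`. -/
def GLle (n : ℕ) (p : Fin n → ℕ) (x y : GLgroup n p) : Prop :=
  y - x ∈ GLplus n p

/-- The dualizing element `ω⃗ = (n − d − 1) c⃗ − Σ_i x⃗_i` of `𝕃`. -/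
def GLomega (d n : ℕ) (p : Fin n → ℕ) : GLgroup n p :=
  ((n : ℤ) - d - 1) • GLc n p - ∑ i, GLx n p i

theorem GLc_eq_smul (n : ℕ) (p : Fin n → ℕ) (i : Fin n) :
    (p i : ℤ) • GLx n p i = GLc n p := by
  unfold GLx GLc
  rw [← QuotientAddGroup.mk_zsmul, QuotientAddGroup.eq]
  have h : ((Pi.single i (p i : ℤ), -1) : (Fin n → ℤ) × ℤ) ∈ GLrels n p :=
    AddSubgroup.subset_closure ⟨i, rfl⟩
  have h2 := (GLrels n p).neg_mem h
  convert h2 using 1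
  ext j
  · by_cases hj : j = i
    · subst hj; simp
    · simp [hj]
  · simp

theorem GL_rep (n : ℕ) (p : Fin n → ℕ) (x : GLgroup n p) :
    ∃ (v : Fin n → ℤ) (m : ℤ), x = ∑ i, v i • GLx n p i + m • GLc n p := by
  obtain ⟨⟨v, m⟩, rfl⟩ := QuotientAddGroup.mk_surjective x
  refine ⟨v, m, ?_⟩
  have h : ((v, m) : (Fin n → ℤ) × ℤ)
      = ∑ i, v i • ((Pi.single i 1, 0) : (Fin n → ℤ) × ℤ) + m • ((0, 1) : (Fin n → ℤ) × ℤ) := by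
    ext j
    · simp [Prod.fst_sum, Finset.sum_apply, Pi.single_apply]
    · simp [Prod.snd_sum]
  have h3 := congrArg (QuotientAddGroup.mk' (GLrels n p)) h
  rw [map_add, map_sum] at h3
  simp only [map_zsmul] at h3
  exact h3

theorem GL_normal (n : ℕ) (p : Fin n → ℕ) (hp : ∀ i, 0 < p i) (x : GLgroup n p) :
    ∃ (a : Fin n → ℤ) (m : ℤ), (∀ i, 0 ≤ a i ∧ a i < p i) ∧
      x = ∑ i, a i • GLx n p i + m • GLc n p := by
  obtain ⟨v, m, rfl⟩ := GL_rep n p x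
  refine ⟨fun i => v i % p i, m + ∑ i, v i / p i, fun i => ?_, ?_⟩
  · have := hp i
    exact ⟨Int.emod_nonneg _ (by omega), Int.emod_lt_of_pos _ (by omega)⟩
  · have h : ∀ i, v i • GLx n p i = (v i % p i) • GLx n p i + (v i / p i) • GLc n p := by
      intro i
      rw [← GLc_eq_smul n p i, ← mul_zsmul', ← add_zsmul]
      congr 1
      have := Int.emod_add_mul_ediv (v i) (p i)
      linarith
    rw [Finset.sum_congr rfl (fun i _ => h i), Finset.sum_add_distrib, add_zsmul]
    have h2 : (∑ i, v i / (p i : ℤ)) • GLc n p = ∑ i, (v i / (p i : ℤ)) • GLc n p :=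
      map_sum (zmultiplesHom _ (GLc n p)) _ _
    rw [h2]
    abel

theorem GL_mem_plus (n : ℕ) (p : Fin n → ℕ) (a : Fin n → ℤ) (m : ℤ) (ha : ∀ i, 0 ≤ a i)
    (hm : 0 ≤ m) : ∑ i, a i • GLx n p i + m • GLc n p ∈ GLplus n p := by
  refine add_mem (sum_mem fun i _ => ?_) ?_
  · obtain ⟨k, hk⟩ := Int.eq_ofNat_of_zero_le (ha i)
    rw [hk, natCast_zsmul]
    exact (GLplus n p).nsmul_mem (AddSubmonoid.subset_closure (Set.mem_union_right _ ⟨i, rfl⟩)) k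
  · obtain ⟨k, hk⟩ := Int.eq_ofNat_of_zero_le hm
    rw [hk, natCast_zsmul]
    exact (GLplus n p).nsmul_mem (AddSubmonoid.subset_closure (Set.mem_union_left _ rfl)) k

theorem GL_dichotomy (d n : ℕ) (p : Fin n → ℕ) (hp : ∀ i, 0 < p i) (x : GLgroup n p) :
    x ∈ GLplus n p ∨ (d : ℤ) • GLc n p + GLomega d n p - x ∈ GLplus n p := by
  obtain ⟨a, m, ha, rfl⟩ := GL_normal n p hp x
  rcases le_or_gt 0 m with hm | hm
  · exact Or.inl (GL_mem_plus n p a m (fun i => (ha i).1) hm)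
  · right
    have h := GL_mem_plus n p (fun i => p i - 1 - a i) (-1 - m)
      (fun i => by have := (ha i).2; omega) (by omega)
    convert h using 1
    have h1 : ∑ i, ((p i : ℤ) - 1 - a i) • GLx n p i
        = (n : ℤ) • GLc n p - ∑ i, GLx n p i - ∑ i, a i • GLx n p i := by
      have h2 : ∀ i, ((p i : ℤ) - 1 - a i) • GLx n p i
          = GLc n p - GLx n p i - a i • GLx n p i := by
        intro i
        rw [← GLc_eq_smul n p i, sub_zsmul, sub_zsmul, one_zsmul]
        abel
      rw [Finset.sum_congr rfl (fun i _ => h2 i), Finset.sum_sub_distrib, Finset.sum_sub_distrib]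
      simp
    rw [h1]
    simp only [sub_zsmul, one_zsmul, GLomega, neg_zsmul]
    abel

theorem GL_delta_nonneg (n : ℕ) (p : Fin n → ℕ)
    (δ : GLgroup n p →+ ℚ) (hδx : ∀ i, δ (GLx n p i) = 1 / (p i : ℚ))
    (hδc : δ (GLc n p) = 1) (x : GLgroup n p) (hx : x ∈ GLplus n p) : 0 ≤ δ x := by
  have h : GLplus n p ≤ (AddSubmonoid.nonneg ℚ).comap δ := by
    refine AddSubmonoid.closure_le.2 ?_
    rintro y (rfl | ⟨i, rfl⟩)
    · simp [hδc]
    · simp [hδx]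
  exact h hx

/-- In the Fano case `δ(ω⃗) < 0`, i.e. when the group homomorphism
`δ : 𝕃 → ℚ` with `δ(x⃗_i) = 1/p_i` and `δ(c⃗) = 1` satisfies `δ(ω⃗) < 0`, the quotient
map `𝕃 → 𝕃/ℤω⃗` restricted to the interval `[0, d c⃗]` is surjective onto `𝕃/ℤω⃗`. -/
theorem interval_surjects_onto_quotient_of_fano (d n : ℕ) (hd : 1 ≤ d) (p : Fin n → ℕ)
    (hp : ∀ i, 0 < p i)
    (δ : GLgroup n p →+ ℚ) (hδx : ∀ i, δ (GLx n p i) = 1 / (p i : ℚ))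
    (hδc : δ (GLc n p) = 1) (hFano : δ (GLomega d n p) < 0) :
    Set.SurjOn (QuotientAddGroup.mk' (AddSubgroup.zmultiples (GLomega d n p)))
      {z : GLgroup n p | GLle n p 0 z ∧ GLle n p z ((d : ℤ) • GLc n p)}
      Set.univ := by
  rintro q -
  obtain ⟨y, rfl⟩ := QuotientAddGroup.mk_surjective q
  have hpos := GL_delta_nonneg n p δ hδx hδc
  set w := GLomega d n p with hw
  have hbd : ∃ b : ℤ, ∀ k : ℤ, y + k • w ∈ GLplus n p → k ≤ b := by
    obtain ⟨b, hb⟩ := exists_int_gt (δ y / (-δ w))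
    refine ⟨b, fun k hk => ?_⟩
    have h := hpos _ hk
    rw [map_add, map_zsmul, zsmul_eq_mul] at h
    have h2 : (k : ℚ) ≤ δ y / (-δ w) := by
      rw [le_div_iff₀ (by linarith)]; linarith
    exact_mod_cast (h2.trans hb.le)
  have hne : ∃ k : ℤ, y + k • w ∈ GLplus n p := by
    obtain ⟨N, hN⟩ := exists_int_gt ((d + δ w - δ y) / (-δ w))
    refine ⟨-N, (GL_dichotomy d n p hp _).resolve_right fun h => ?_⟩
    have h := hpos _ h
    rw [← hw, map_sub, map_add, map_add, map_zsmul, map_zsmul, hδc, zsmul_eq_mul,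
      zsmul_eq_mul] at h
    rw [div_lt_iff₀ (by linarith)] at hN
    push_cast at h
    linarith
  obtain ⟨k, hk, hmax⟩ := Int.exists_greatest_of_bdd hbd hne
  refine ⟨y + k • w, ⟨by simpa [GLle] using hk, ?_⟩, ?_⟩
  · have h := (GL_dichotomy d n p hp (y + (k + 1) • w)).resolve_left fun h => by
      have := hmax _ h
      omega
    unfold GLle
    convert h using 1
    rw [add_zsmul, one_zsmul, ← hw]
    abel
  · rw [QuotientAddGroup.mk'_apply, QuotientAddGroup.eq]
    refine AddSubgroup.mem_zmultiples_iff.2 ⟨-k, ?_⟩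
    rw [neg_zsmul]
    abel
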